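/- Let ν ∈ [α, (1+α)/2] and let x be a solution of the heavy ball equation with vanishing damping and source term g satisfying ∫₀^∞ (1+t)^ν ‖g(t)‖ dt < ∞. Then ∫₀^∞ (1+t)^{2ν−α} ‖x'(t)‖² dt < ∞. -/

import Mathlib

open MeasureTheory Filter Real Set RealInnerProductSpace

/-!
Write `s = 1 + t`, `v = x'`, and `y = x - z` for a minimizer `z` of `Φ`. The Lyapunov function is
`E = s ^ (2ν) (‖v‖² / 2 + Φ x - Φ z) + 2 s ^ (2ν-1) ⟪y, v⟫ + K ‖y‖²`, where
`K = c s ^ (2ν-1-α) - (2ν-1) s ^ (2ν-2)` is chosen so that the terms in `⟪y, v⟫` cancel in `E'`.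
Since `α < 1`, eventually `s ^ (α-1) ≤ c / 10`. From then on `E` dominates both `s ^ (2ν) ‖v‖²` and
`s ^ (2ν-1-α) ‖y‖²` up to constants, and `E' ≤ a (1 + E) - (c / 2) s ^ (2ν-α) ‖v‖²`, where
`a = 2 s ^ ν ‖g‖ + C s ^ (α-2)` is integrable. By Grönwall `E` is bounded, and integrating the
inequality once more bounds the integral of `s ^ (2ν-α) ‖v‖²`.
-/

section Gronwall

variable {u a b P : ℝ → ℝ} {t₀ T m : ℝ}

theorem intervalIntegral_le_integral_Ici_norm (ha : IntegrableOn a (Ici t₀)) (hT : t₀ ≤ T) :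
    ∫ t in t₀..T, a t ≤ ∫ t in Ici t₀, ‖a t‖ := by
  calc ∫ t in t₀..T, a t ≤ ‖∫ t in t₀..T, a t‖ := le_norm_self _
    _ ≤ ∫ t in t₀..T, ‖a t‖ := intervalIntegral.norm_integral_le_integral_norm hT
    _ = ∫ t in Ioc t₀ T, ‖a t‖ := intervalIntegral.integral_of_le hT
    _ ≤ ∫ t in Ici t₀, ‖a t‖ :=
      setIntegral_mono_set ha.norm (Eventually.of_forall fun t => norm_nonneg (a t))
        (Ioc_subset_Ioi_self.trans Ioi_subset_Ici_self).eventuallyLE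

theorem sub_le_intervalIntegral_of_deriv_le (hu : ∀ t ∈ Icc t₀ T, DifferentiableAt ℝ u t)
    (hb : IntegrableOn b (Icc t₀ T)) (hle : ∀ t ∈ Icc t₀ T, deriv u t ≤ b t) (hT : t₀ ≤ T) :
    u T - u t₀ ≤ ∫ t in t₀..T, b t :=
  intervalIntegral.sub_le_integral_of_hasDeriv_right_of_le hT
    (fun t ht => (hu t ht).continuousAt.continuousWithinAt)
    (fun t ht => (hu t (Ioo_subset_Icc_self ht)).hasDerivAt.hasDerivWithinAt) hb
    fun t ht => hle t (Ioo_subset_Icc_self ht)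

theorem le_mul_exp_intervalIntegral_of_deriv_le_mul
    (hu : ∀ t ∈ Icc t₀ T, DifferentiableAt ℝ u t) (hpos : ∀ t ∈ Icc t₀ T, 0 < u t)
    (ha : IntegrableOn a (Icc t₀ T)) (hle : ∀ t ∈ Icc t₀ T, deriv u t ≤ a t * u t)
    (hT : t₀ ≤ T) : u T ≤ u t₀ * exp (∫ t in t₀..T, a t) := by
  have hlog : log (u T) - log (u t₀) ≤ ∫ t in t₀..T, a t := by
    refine sub_le_intervalIntegral_of_deriv_le (u := fun t => log (u t))
      (fun t ht => (hu t ht).log (hpos t ht).ne') ha (fun t ht => ?_) hT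
    rw [deriv.log (hu t ht) (hpos t ht).ne', div_le_iff₀ (hpos t ht)]
    exact hle t ht
  have hu₀ : 0 < u t₀ := hpos t₀ (left_mem_Icc.2 hT)
  have huT : 0 < u T := hpos T (right_mem_Icc.2 hT)
  calc u T = exp (log (u T)) := (exp_log huT).symm
    _ ≤ exp (log (u t₀) + ∫ t in t₀..T, a t) := exp_le_exp.2 (by linarith)
    _ = u t₀ * exp (∫ t in t₀..T, a t) := by rw [exp_add, exp_log hu₀]

theorem integrableOn_Ici_of_deriv_le_sub (hu : ∀ t ∈ Ici t₀, DifferentiableAt ℝ u t)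
    (hm : ∀ t ∈ Ici t₀, m ≤ u t) (hb : IntegrableOn b (Ici t₀))
    (hP₀ : ∀ t ∈ Ici t₀, 0 ≤ P t) (hP : LocallyIntegrableOn P (Ici t₀))
    (hle : ∀ t ∈ Ici t₀, deriv u t ≤ b t - P t) : IntegrableOn P (Ici t₀) := by
  have hP_Icc (T : ℝ) : IntegrableOn P (Icc t₀ T) :=
    hP.integrableOn_compact_subset Icc_subset_Ici_self isCompact_Icc
  rw [integrableOn_Ici_iff_integrableOn_Ioi]
  refine integrableOn_Ioi_of_intervalIntegral_norm_bounded (b := id) (l := atTop)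
    ((∫ t in Ici t₀, ‖b t‖) + u t₀ - m) t₀
    (fun T => (hP_Icc T).mono_set Ioc_subset_Icc_self) tendsto_id ?_
  filter_upwards [eventually_ge_atTop t₀] with T hT
  have hb_Icc : IntegrableOn b (Icc t₀ T) := hb.mono_set Icc_subset_Ici_self
  have hincrement : u T - u t₀ ≤ (∫ t in t₀..T, b t) - ∫ t in t₀..T, P t := by
    rw [← intervalIntegral.integral_sub
      ((intervalIntegrable_iff_integrableOn_Icc_of_le hT).2 hb_Icc)
      ((intervalIntegrable_iff_integrableOn_Icc_of_le hT).2 (hP_Icc T))]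
    exact sub_le_intervalIntegral_of_deriv_le (fun t ht => hu t ht.1)
      (hb_Icc.sub (hP_Icc T)) (fun t ht => hle t ht.1) hT
  have hnorm : ∫ t in t₀..T, ‖P t‖ = ∫ t in t₀..T, P t :=
    intervalIntegral.integral_congr fun t ht =>
      norm_of_nonneg (hP₀ t (uIcc_of_le hT ▸ ht).1)
  have hb_le := intervalIntegral_le_integral_Ici_norm hb hT
  rw [id, hnorm]
  linarith [hm T hT]

theorem integrableOn_Ici_of_deriv_le_mul_sub (hu : ∀ t ∈ Ici t₀, DifferentiableAt ℝ u t)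
    (hpos : ∀ t ∈ Ici t₀, 0 < u t) (ha : IntegrableOn a (Ici t₀))
    (hP₀ : ∀ t ∈ Ici t₀, 0 ≤ P t) (hP : LocallyIntegrableOn P (Ici t₀))
    (hle : ∀ t ∈ Ici t₀, deriv u t ≤ a t * u t - P t) : IntegrableOn P (Ici t₀) := by
  set M := u t₀ * exp (∫ t in Ici t₀, ‖a t‖)
  have hbounded : ∀ T ∈ Ici t₀, u T ≤ M := by
    intro T hT
    have hgronwall : u T ≤ u t₀ * exp (∫ t in t₀..T, a t) :=
      le_mul_exp_intervalIntegral_of_deriv_le_mul (fun t ht => hu t ht.1)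
        (fun t ht => hpos t ht.1) (ha.mono_set Icc_subset_Ici_self)
        (fun t ht => (hle t ht.1).trans (sub_le_self _ (hP₀ t ht.1))) hT
    have hexp := exp_le_exp.2 (intervalIntegral_le_integral_Ici_norm ha hT)
    exact hgronwall.trans (mul_le_mul_of_nonneg_left hexp (hpos t₀ self_mem_Ici).le)
  refine integrableOn_Ici_of_deriv_le_sub hu (fun t ht => (hpos t ht).le)
    (ha.norm.mul_const M) hP₀ hP fun t ht => (hle t ht).trans (sub_le_sub_right ?_ _)
  calc a t * u t ≤ ‖a t‖ * u t := mul_le_mul_of_nonneg_right (le_norm_self _) (hpos t ht).le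
    _ ≤ ‖a t‖ * M := mul_le_mul_of_nonneg_left (hbounded t ht) (norm_nonneg _)

end Gronwall

section Convex

variable {E : Type*} [NormedAddCommGroup E] [NormedSpace ℝ E]

theorem sub_le_fderiv_sub_of_convexOn {f : E → ℝ} {f' : E →L[ℝ] ℝ} {u : E}
    (hf : ConvexOn ℝ univ f) (hf' : HasFDerivAt f f' u) (z : E) : f u - f z ≤ f' (u - z) := by
  have hline : HasDerivAt (f ∘ AffineMap.lineMap (k := ℝ) u z) (f' (z - u)) 0 := by
    refine HasFDerivAt.comp_hasDerivAt 0 ?_ AffineMap.hasDerivAt_lineMap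
    rwa [AffineMap.lineMap_apply_zero]
  have hslope := (hf.comp_affineMap (AffineMap.lineMap u z)).le_slope_of_hasDerivAt
    (mem_univ 0) (mem_univ 1) one_pos hline
  simp only [slope_def_field, Function.comp_apply, AffineMap.lineMap_apply_zero,
    AffineMap.lineMap_apply_one, sub_zero, div_one, map_sub] at hslope ⊢
  linarith

end Convex

section Weights

theorem mul_rpow_le_mul_rpow_of_sub_eq_sub_one {c k s α p q : ℝ} (hs : 0 < s)
    (h : k * s ^ (α - 1) ≤ c) (hpq : p - q = α - 1) : k * s ^ p ≤ c * s ^ q := by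
  calc k * s ^ p = k * s ^ (α - 1) * s ^ q := by
        rw [mul_assoc, ← rpow_add hs, ← hpq, sub_add_cancel]
    _ ≤ c * s ^ q := mul_le_mul_of_nonneg_right h (rpow_nonneg hs.le q)

theorem hasDerivAt_one_add_rpow {t : ℝ} (ht : 0 < 1 + t) (p : ℝ) :
    HasDerivAt (fun τ : ℝ => (1 + τ) ^ p) (p * (1 + t) ^ (p - 1)) t := by
  simpa only [one_mul] using ((hasDerivAt_id' t).const_add 1).rpow_const (Or.inl ht.ne')

theorem integrableOn_Ici_one_add_rpow {p : ℝ} (hp : p < -1) :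
    IntegrableOn (fun t : ℝ => (1 + t) ^ p) (Ici 0) := by
  rw [integrableOn_Ici_iff_integrableOn_Ioi]
  simpa only [add_comm] using integrableOn_add_rpow_Ioi_of_lt (c := 0) (m := 1) hp (by norm_num)

theorem eventually_mul_one_add_rpow_le {c p : ℝ} (hc : 0 < c) (hp : p < 0) (k : ℝ) :
    ∀ᶠ t : ℝ in atTop, k * (1 + t) ^ p ≤ c := by
  have hlim : Tendsto (fun t : ℝ => k * (1 + t) ^ p) atTop (nhds (k * 0)) := by
    have := (tendsto_rpow_neg_atTop (neg_pos.2 hp)).comp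
      (tendsto_atTop_add_const_left atTop 1 tendsto_id)
    simpa only [neg_neg, Function.comp_def, id] using this.const_mul k
  rw [mul_zero] at hlim
  exact hlim.eventually_le_const hc

end Weights

section Lyapunov

variable {H : Type*} [NormedAddCommGroup H] [InnerProductSpace ℝ H]

/-- The Lyapunov function of the heavy ball equation at position `u` and velocity `v`: the
mechanical energy above the level `Φ z`, with weight `A`, corrected by a cross term of weight `2B`
and a squared distance to `z` of weight `K`. -/
noncomputable def lyapunov (Φ : H → ℝ) (z : H) (A B K : ℝ) (u v : H) : ℝ :=
  A * (‖v‖ ^ 2 / 2 + (Φ u - Φ z)) + 2 * B * ⟪u - z, v⟫ + K * ‖u - z‖ ^ 2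

/-- The function `lyapunov` with the power weights that suit the damping `c / s ^ α`, where
`s = 1 + t` is the shifted time. The weight `K` equals `γ * B - B'` for `γ = c / s ^ α` and
`B = s ^ (2 * ν - 1)`. -/
noncomputable def powerLyapunov (c α ν : ℝ) (Φ : H → ℝ) (z : H) (s : ℝ) (u v : H) : ℝ :=
  lyapunov Φ z (s ^ (2 * ν)) (s ^ (2 * ν - 1))
    (c * s ^ (2 * ν - 1 - α) - (2 * ν - 1) * s ^ (2 * ν - 2)) u v

variable {Φ : H → ℝ} {z : H}

theorem hasDerivAt_lyapunov {x x' : ℝ → H} {x'' dΦ g : H} {A B K : ℝ → ℝ} {A' B' K' γ t : ℝ}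
    (hA : HasDerivAt A A' t) (hB : HasDerivAt B B' t) (hK : HasDerivAt K K' t)
    (hΦ : HasFDerivAt Φ (innerSL ℝ dΦ) (x t)) (hx : HasDerivAt x (x' t) t)
    (hx' : HasDerivAt x' x'' t) (hode : x'' + γ • x' t + dΦ = g) (hKB : K t = γ * B t - B') :
    HasDerivAt (fun τ => lyapunov Φ z (A τ) (B τ) (K τ) (x τ) (x' τ))
      (A' * (‖x' t‖ ^ 2 / 2 + (Φ (x t) - Φ z)) - 2 * B t * ⟪dΦ, x t - z⟫
        + (2 * B t - γ * A t) * ‖x' t‖ ^ 2 + ⟪A t • x' t + (2 * B t) • (x t - z), g⟫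
        + K' * ‖x t - z‖ ^ 2) t := by
  have hy : HasDerivAt (fun τ => x τ - z) (x' t) t := hx.sub_const z
  have hΦx : HasDerivAt (fun τ => Φ (x τ)) ⟪dΦ, x' t⟫ t := hΦ.comp_hasDerivAt t hx
  have henergy := hA.mul ((hx'.norm_sq.div_const 2).add (hΦx.sub_const (Φ z)))
  have hcross := (hB.const_mul 2).mul (hy.inner ℝ hx')
  have hx''_eq : x'' = g - γ • x' t - dΦ := by rw [← hode]; abel
  refine ((henergy.add hcross).add (hK.mul hy.norm_sq)).congr_deriv ?_
  simp only [hx''_eq, hKB, inner_sub_right, inner_add_left, real_inner_smul_left,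
    real_inner_smul_right, real_inner_self_eq_norm_sq, Pi.add_apply]
  rw [real_inner_comm dΦ (x' t), real_inner_comm dΦ (x t - z), inner_sub_right]
  ring

theorem mul_energy_sub_inner_le {A' B : ℝ} {u v dΦ : H} (hmin : Φ z ≤ Φ u)
    (hstar : Φ u - Φ z ≤ ⟪dΦ, u - z⟫) (hB : 0 ≤ B) (hA' : A' ≤ 2 * B) :
    A' * (‖v‖ ^ 2 / 2 + (Φ u - Φ z)) - 2 * B * ⟪dΦ, u - z⟫ ≤ B * ‖v‖ ^ 2 := by
  have henergy : 0 ≤ ‖v‖ ^ 2 / 2 + (Φ u - Φ z) := by linarith [sq_nonneg ‖v‖]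
  have hA'_mul := mul_le_mul_of_nonneg_right hA' henergy
  have hB_mul := mul_le_mul_of_nonneg_left hstar hB
  linarith

theorem inner_le_of_sq_add_sq_le {ω η F : ℝ} {y v : H} (hω : 0 ≤ ω) (hη : 0 ≤ η)
    (hF : (ω * ‖v‖) ^ 2 / 4 + (η * ‖y‖) ^ 2 ≤ F) (g : H) :
    ⟪ω ^ 2 • v + (2 * (ω * η)) • y, g⟫ ≤ 2 * (ω * ‖g‖) * (1 + F) := by
  have hnorm : ω * ‖v‖ + 2 * (η * ‖y‖) ≤ 2 * (1 + F) := by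
    linarith [sq_nonneg (ω * ‖v‖ / 2 - 1), sq_nonneg (η * ‖y‖ - 1), sq_nonneg (ω * ‖v‖),
      sq_nonneg (η * ‖y‖)]
  calc ⟪ω ^ 2 • v + (2 * (ω * η)) • y, g⟫
      = ω * (ω * ⟪v, g⟫ + 2 * (η * ⟪y, g⟫)) := by
        rw [inner_add_left, real_inner_smul_left, real_inner_smul_left]; ring
    _ ≤ ω * (ω * (‖v‖ * ‖g‖) + 2 * (η * (‖y‖ * ‖g‖))) := by
        gcongr <;> exact real_inner_le_norm _ _
    _ = ω * ‖g‖ * (ω * ‖v‖ + 2 * (η * ‖y‖)) := by ring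
    _ ≤ ω * ‖g‖ * (2 * (1 + F)) := mul_le_mul_of_nonneg_left hnorm (by positivity)
    _ = 2 * (ω * ‖g‖) * (1 + F) := by ring

theorem le_lyapunov {A B K κ : ℝ} {u : H} (hmin : Φ z ≤ Φ u) (hA : 0 < A)
    (hB : 4 * B ^ 2 ≤ A * (K - κ)) (v : H) :
    A * ‖v‖ ^ 2 / 4 + κ * ‖u - z‖ ^ 2 ≤ lyapunov Φ z A B K u v := by
  set p := ‖v‖
  set q := ‖u - z‖
  have hcross : -(|B| * (q * p)) ≤ B * ⟪u - z, v⟫ := by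
    refine neg_le_of_abs_le ?_
    rw [abs_mul]
    exact mul_le_mul_of_nonneg_left (abs_real_inner_le_norm _ _) (abs_nonneg B)
  have hquad : 0 ≤ A * p ^ 2 / 4 - 2 * (|B| * (q * p)) + (K - κ) * q ^ 2 := by
    refine nonneg_of_mul_nonneg_right ?_ hA
    calc 0 ≤ (A * p / 2 - 2 * |B| * q) ^ 2 := sq_nonneg _
      _ = A * (A * p ^ 2 / 4 - 2 * (|B| * (q * p))) + 4 * B ^ 2 * q ^ 2 := by
        rw [← sq_abs B]; ring
      _ ≤ A * (A * p ^ 2 / 4 - 2 * (|B| * (q * p))) + A * (K - κ) * q ^ 2 := by gcongr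
      _ = A * (A * p ^ 2 / 4 - 2 * (|B| * (q * p)) + (K - κ) * q ^ 2) := by ring
  have hpot : 0 ≤ A * (Φ u - Φ z) := mul_nonneg hA.le (sub_nonneg.2 hmin)
  rw [lyapunov]
  linarith

theorem le_powerLyapunov {c α ν s : ℝ} {u : H} (hν : ν ≤ 1) (hs : 0 < s)
    (hsc : 10 * s ^ (α - 1) ≤ c) (hmin : Φ z ≤ Φ u) (v : H) :
    (s ^ ν * ‖v‖) ^ 2 / 4 + c / 2 * (s ^ (2 * ν - 1 - α) * ‖u - z‖ ^ 2) ≤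
      powerLyapunov c α ν Φ z s u v := by
  have hsmall : 10 * s ^ (2 * ν - 2) ≤ c * s ^ (2 * ν - 1 - α) :=
    mul_rpow_le_mul_rpow_of_sub_eq_sub_one hs hsc (by ring)
  have hν_mul : (2 * ν - 1) * s ^ (2 * ν - 2) ≤ 1 * s ^ (2 * ν - 2) :=
    mul_le_mul_of_nonneg_right (by linarith) (by positivity)
  have hB : 4 * (s ^ (2 * ν - 1)) ^ 2 ≤ s ^ (2 * ν) *
      (c * s ^ (2 * ν - 1 - α) - (2 * ν - 1) * s ^ (2 * ν - 2)
        - c / 2 * s ^ (2 * ν - 1 - α)) := by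
    have hsq : (s ^ (2 * ν - 1)) ^ 2 = s ^ (2 * ν) * s ^ (2 * ν - 2) := by
      rw [sq, ← rpow_add hs, ← rpow_add hs]; ring_nf
    rw [hsq, mul_left_comm]
    exact mul_le_mul_of_nonneg_left (by linarith) (by positivity)
  have hω : (s ^ ν) ^ 2 = s ^ (2 * ν) := by rw [two_mul, rpow_add hs, sq]
  rw [mul_pow, hω, ← mul_assoc]
  exact le_lyapunov hmin (by positivity) hB v

theorem powerLyapunov_nonneg {c α ν s : ℝ} {u : H} (hν : ν ≤ 1) (hs : 0 < s)
    (hsc : 10 * s ^ (α - 1) ≤ c) (hmin : Φ z ≤ Φ u) (v : H) :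
    0 ≤ powerLyapunov c α ν Φ z s u v := by
  have hc : 0 ≤ c := le_trans (by positivity) hsc
  exact le_trans (by positivity) (le_powerLyapunov hν hs hsc hmin v)

theorem inner_rpow_weights_le {c α ν s F : ℝ} {y v : H} (hs : 0 < s)
    (hsc : 10 * s ^ (α - 1) ≤ c)
    (hF : (s ^ ν * ‖v‖) ^ 2 / 4 + c / 2 * (s ^ (2 * ν - 1 - α) * ‖y‖ ^ 2) ≤ F) (g : H) :
    ⟪s ^ (2 * ν) • v + (2 * s ^ (2 * ν - 1)) • y, g⟫ ≤ 2 * (s ^ ν * ‖g‖) * (1 + F) := by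
  have hω : s ^ (2 * ν) = (s ^ ν) ^ 2 := by rw [two_mul, rpow_add hs, sq]
  have hωη : s ^ (2 * ν - 1) = s ^ ν * s ^ (ν - 1) := by rw [← rpow_add hs]; ring_nf
  have hη : (s ^ (ν - 1)) ^ 2 = s ^ (2 * ν - 2) := by rw [sq, ← rpow_add hs]; ring_nf
  have hsmall : 10 * s ^ (2 * ν - 2) * ‖y‖ ^ 2 ≤ c * s ^ (2 * ν - 1 - α) * ‖y‖ ^ 2 :=
    mul_le_mul_of_nonneg_right
      (mul_rpow_le_mul_rpow_of_sub_eq_sub_one hs hsc (by ring)) (by positivity)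
  have hdist : (s ^ (ν - 1) * ‖y‖) ^ 2 ≤ c / 2 * (s ^ (2 * ν - 1 - α) * ‖y‖ ^ 2) := by
    have : 0 ≤ s ^ (2 * ν - 2) * ‖y‖ ^ 2 := by positivity
    rw [mul_pow, hη]
    linarith
  rw [hω, hωη]
  exact inner_le_of_sq_add_sq_le (by positivity) (by positivity)
    ((add_le_add_right hdist _).trans hF) g

theorem deriv_distance_weight_le {c α ν s : ℝ} (hc : 0 ≤ c) (hν : ν ≤ (1 + α) / 2) (hs : 0 < s) :
    c * ((2 * ν - 1 - α) * s ^ (2 * ν - 1 - α - 1))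
        - (2 * ν - 1) * ((2 * ν - 2) * s ^ (2 * ν - 2 - 1)) ≤
      |(2 * ν - 1) * (2 * ν - 2)| * s ^ (α - 2) * s ^ (2 * ν - 1 - α) := by
  have hpow : s ^ (2 * ν - 2 - 1) = s ^ (α - 2) * s ^ (2 * ν - 1 - α) := by
    rw [← rpow_add hs]; ring_nf
  have hfirst : c * ((2 * ν - 1 - α) * s ^ (2 * ν - 1 - α - 1)) ≤ 0 :=
    mul_nonpos_of_nonneg_of_nonpos hc
      (mul_nonpos_of_nonpos_of_nonneg (by linarith) (by positivity))
  have hsecond := mul_le_mul_of_nonneg_right (neg_le_abs ((2 * ν - 1) * (2 * ν - 2)))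
    (by positivity : 0 ≤ s ^ (α - 2) * s ^ (2 * ν - 1 - α))
  rw [hpow]
  linarith

theorem deriv_distance_weight_mul_le {c α ν s r F : ℝ} (hc : 0 < c) (hν : ν ≤ (1 + α) / 2)
    (hs : 0 < s) (hr : 0 ≤ r) (hF : c / 2 * (s ^ (2 * ν - 1 - α) * r) ≤ F) :
    (c * ((2 * ν - 1 - α) * s ^ (2 * ν - 1 - α - 1))
        - (2 * ν - 1) * ((2 * ν - 2) * s ^ (2 * ν - 2 - 1))) * r ≤
      2 / c * |(2 * ν - 1) * (2 * ν - 2)| * s ^ (α - 2) * F := by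
  set C := |(2 * ν - 1) * (2 * ν - 2)|
  calc _ ≤ C * s ^ (α - 2) * s ^ (2 * ν - 1 - α) * r :=
        mul_le_mul_of_nonneg_right (deriv_distance_weight_le hc.le hν hs) hr
    _ = 2 / c * C * s ^ (α - 2) * (c / 2 * (s ^ (2 * ν - 1 - α) * r)) := by field_simp
    _ ≤ 2 / c * C * s ^ (α - 2) * F := mul_le_mul_of_nonneg_left hF (by positivity)

section Trajectory

variable {x x' : ℝ → H} {x'' dΦ g : H} {c α ν t : ℝ}

theorem hasDerivAt_powerLyapunov (ht : 0 < 1 + t) (hΦ : HasFDerivAt Φ (innerSL ℝ dΦ) (x t))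
    (hx : HasDerivAt x (x' t) t) (hx' : HasDerivAt x' x'' t)
    (hode : x'' + (c / (1 + t) ^ α) • x' t + dΦ = g) :
    HasDerivAt (fun τ => powerLyapunov c α ν Φ z (1 + τ) (x τ) (x' τ))
      (2 * ν * (1 + t) ^ (2 * ν - 1) * (‖x' t‖ ^ 2 / 2 + (Φ (x t) - Φ z))
        - 2 * (1 + t) ^ (2 * ν - 1) * ⟪dΦ, x t - z⟫
        + (2 * (1 + t) ^ (2 * ν - 1) - c / (1 + t) ^ α * (1 + t) ^ (2 * ν)) * ‖x' t‖ ^ 2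
        + ⟪(1 + t) ^ (2 * ν) • x' t + (2 * (1 + t) ^ (2 * ν - 1)) • (x t - z), g⟫
        + (c * ((2 * ν - 1 - α) * (1 + t) ^ (2 * ν - 1 - α - 1))
          - (2 * ν - 1) * ((2 * ν - 2) * (1 + t) ^ (2 * ν - 2 - 1))) * ‖x t - z‖ ^ 2) t := by
  have hweight := hasDerivAt_one_add_rpow ht
  refine hasDerivAt_lyapunov (hweight (2 * ν)) (hweight (2 * ν - 1))
    (((hweight (2 * ν - 1 - α)).const_mul c).sub ((hweight (2 * ν - 2)).const_mul (2 * ν - 1)))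
    hΦ hx hx' hode ?_
  rw [rpow_sub ht (2 * ν - 1) α, show 2 * ν - 1 - 1 = 2 * ν - 2 by ring]
  ring

theorem deriv_powerLyapunov_le (hα : α < 1) (hν : ν ≤ (1 + α) / 2) (ht : 0 < 1 + t)
    (htc : 10 * (1 + t) ^ (α - 1) ≤ c) (hmin : Φ z ≤ Φ (x t))
    (hstar : Φ (x t) - Φ z ≤ ⟪dΦ, x t - z⟫) (hΦ : HasFDerivAt Φ (innerSL ℝ dΦ) (x t))
    (hx : HasDerivAt x (x' t) t) (hx' : HasDerivAt x' x'' t)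
    (hode : x'' + (c / (1 + t) ^ α) • x' t + dΦ = g) :
    deriv (fun τ => powerLyapunov c α ν Φ z (1 + τ) (x τ) (x' τ)) t ≤
      (2 * ((1 + t) ^ ν * ‖g‖) + 2 / c * |(2 * ν - 1) * (2 * ν - 2)| * (1 + t) ^ (α - 2))
          * (1 + powerLyapunov c α ν Φ z (1 + t) (x t) (x' t))
        - c / 2 * ((1 + t) ^ (2 * ν - α) * ‖x' t‖ ^ 2) := by
  rw [(hasDerivAt_powerLyapunov ht hΦ hx hx' hode).deriv]
  have hc : 0 < c := lt_of_lt_of_le (by positivity) htc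
  have hF := le_powerLyapunov (by linarith : ν ≤ 1) ht htc hmin (x' t)
  set s := 1 + t
  set F := powerLyapunov c α ν Φ z s (x t) (x' t)
  set v := x' t
  set y := x t - z
  have henergy : 2 * ν * s ^ (2 * ν - 1) * (‖v‖ ^ 2 / 2 + (Φ (x t) - Φ z))
      - 2 * s ^ (2 * ν - 1) * ⟪dΦ, y⟫ ≤ s ^ (2 * ν - 1) * ‖v‖ ^ 2 :=
    mul_energy_sub_inner_le hmin hstar (by positivity)
      (mul_le_mul_of_nonneg_right (by linarith) (by positivity))
  have hdamping : c / s ^ α * s ^ (2 * ν) = c * s ^ (2 * ν - α) := by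
    rw [rpow_sub ht]; ring
  have hfriction : 10 * s ^ (2 * ν - 1) * ‖v‖ ^ 2 ≤ c * s ^ (2 * ν - α) * ‖v‖ ^ 2 :=
    mul_le_mul_of_nonneg_right
      (mul_rpow_le_mul_rpow_of_sub_eq_sub_one ht htc (by ring)) (by positivity)
  have hsource := inner_rpow_weights_le ht htc hF g
  have hdistance := deriv_distance_weight_mul_le hc hν ht (sq_nonneg ‖y‖)
    ((le_add_of_nonneg_left (by positivity)).trans hF)
  have hcoeff : 0 ≤ 2 / c * |(2 * ν - 1) * (2 * ν - 2)| * s ^ (α - 2) := by positivity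
  have hdissipation : 0 ≤ c * s ^ (2 * ν - α) * ‖v‖ ^ 2 := by positivity
  rw [hdamping]
  linarith

end Trajectory

end Lyapunov

theorem heavy_ball_velocity_weighted_integrable_general
    {H : Type*} [NormedAddCommGroup H] [InnerProductSpace ℝ H] {c α ν : ℝ} (hc : 0 < c)
    (hα : α < 1) (hν : ν ≤ (1 + α) / 2) {Φ : H → ℝ} {Φ' : H → H} {z : H}
    (hΦ : ∀ u, HasFDerivAt Φ (innerSL ℝ (Φ' u)) u) (hmin : ∀ u, Φ z ≤ Φ u)
    (hstar : ∀ u, Φ u - Φ z ≤ ⟪Φ' u, u - z⟫) {g x x' x'' : ℝ → H}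
    (hx : ∀ t ∈ Ici (0 : ℝ), HasDerivAt x (x' t) t)
    (hx' : ∀ t ∈ Ici (0 : ℝ), HasDerivAt x' (x'' t) t)
    (hode : ∀ t ∈ Ici (0 : ℝ), x'' t + (c / (1 + t) ^ α) • x' t + Φ' (x t) = g t)
    (hg : IntegrableOn (fun t => (1 + t) ^ ν * ‖g t‖) (Ici (0 : ℝ))) :
    IntegrableOn (fun t => (1 + t) ^ (2 * ν - α) * ‖x' t‖ ^ 2) (Ici (0 : ℝ)) := by
  have hcont : ContinuousOn (fun t => (1 + t) ^ (2 * ν - α) * ‖x' t‖ ^ 2) (Ici (0 : ℝ)) :=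
    fun t ht => ((hasDerivAt_one_add_rpow (by linarith [mem_Ici.1 ht]) _).continuousAt.mul
      ((hx' t ht).continuousAt.norm.pow 2)).continuousWithinAt
  obtain ⟨T, hT⟩ := eventually_atTop.1
    ((eventually_mul_one_add_rpow_le hc (sub_neg.2 hα) 10).and (eventually_ge_atTop 0))
  have hsub : Ici T ⊆ Ici 0 := fun t ht => (hT t ht).2
  have hs (t : ℝ) (ht : t ∈ Ici T) : 0 < 1 + t := by linarith [(hT t ht).2]
  have hsource : IntegrableOn (fun t => 2 * ((1 + t) ^ ν * ‖g t‖)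
      + 2 / c * |(2 * ν - 1) * (2 * ν - 2)| * (1 + t) ^ (α - 2)) (Ici T) :=
    IntegrableOn.mono_set ((hg.const_mul 2).add
      ((integrableOn_Ici_one_add_rpow (by linarith : α - 2 < -1)).const_mul _)) hsub
  have htail : IntegrableOn (fun t => c / 2 * ((1 + t) ^ (2 * ν - α) * ‖x' t‖ ^ 2)) (Ici T) := by
    refine integrableOn_Ici_of_deriv_le_mul_sub
      (u := fun t => 1 + powerLyapunov c α ν Φ z (1 + t) (x t) (x' t))
      (fun t ht => ?_) (fun t ht => ?_) hsource (fun t ht => ?_) ?_ (fun t ht => ?_)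
    · exact (hasDerivAt_powerLyapunov (hs t ht) (hΦ _) (hx t (hsub ht)) (hx' t (hsub ht))
        (hode t (hsub ht))).differentiableAt.const_add 1
    · exact add_pos_of_pos_of_nonneg one_pos (powerLyapunov_nonneg (by linarith) (hs t ht)
        (hT t ht).1 (hmin _) _)
    · have := hs t ht
      positivity
    · exact ((hcont.mono hsub).const_mul _).locallyIntegrableOn measurableSet_Ici
    · rw [deriv_const_add]
      exact deriv_powerLyapunov_le hα hν (hs t ht) (hT t ht).1 (hmin _) (hstar _) (hΦ _)
        (hx t (hsub ht)) (hx' t (hsub ht)) (hode t (hsub ht))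
  rw [integrableOn_Ici_iff_integrableAtFilter_atTop]
  exact ⟨⟨Ici T, Ici_mem_atTop T,
    (integrable_const_mul_iff (half_pos hc).ne'.isUnit _).1 htail⟩,
    hcont.locallyIntegrableOn measurableSet_Ici⟩

theorem heavy_ball_velocity_weighted_integrable
    {H : Type*} [NormedAddCommGroup H] [InnerProductSpace ℝ H] [CompleteSpace H]
    (c α : ℝ) (hc : 0 < c) (hα0 : 0 ≤ α) (hα1 : α < 1)
    (Φ : H → ℝ) (Φ' : H → H) (Φstar : ℝ)
    (hΦconv : ConvexOn ℝ Set.univ Φ)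
    (hΦdiff : ∀ u : H, HasGradientAt Φ (Φ' u) u)
    (hΦcont : Continuous Φ')
    (hargmin : {v : H | ∀ u, Φ v ≤ Φ u}.Nonempty)
    (hΦstar : ∀ v ∈ {v : H | ∀ u, Φ v ≤ Φ u}, Φ v = Φstar)
    (g : ℝ → H) (hg : IntegrableOn g (Ici (0:ℝ)))
    (x x' x'' : ℝ → H)
    (hx1 : ∀ t ∈ Ici (0:ℝ), HasDerivAt x (x' t) t)
    (hx2 : ∀ t ∈ Ici (0:ℝ), HasDerivAt x' (x'' t) t)
    (hode : ∀ t ∈ Ici (0:ℝ),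
      x'' t + (c / (1 + t) ^ α) • x' t + Φ' (x t) = g t)
    (ν : ℝ) (hν1 : α ≤ ν) (hν2 : ν ≤ (1 + α) / 2)
    (hgν : IntegrableOn (fun t => (1 + t) ^ ν * ‖g t‖) (Ici (0:ℝ))) :
    IntegrableOn (fun t => (1 + t) ^ (2 * ν - α) * ‖x' t‖ ^ 2) (Ici (0:ℝ)) := by
  obtain ⟨z, hz⟩ := hargmin
  exact heavy_ball_velocity_weighted_integrable_general hc hα1 hν2 hΦdiff hz
    (fun u => sub_le_fderiv_sub_of_convexOn hΦconv (hΦdiff u) z) hx1 hx2 hode hgν
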